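/- Central limit theorem in the diffusive regime for the Type-I ERW (one-dimensional marginal at t = 1): if 0 < p < p_c^m, then (S_{2n} − 2n·ū)/√n converges in distribution, as n → ∞, to the centered multivariate Gaussian distribution on ℝ^d with covariance matrix 2·C_a·Σ(U). -/

import Mathlib

/-!
Let `t ∈ ℝ^d` and put `x_j = ⟨t, u_j - ū⟩`, so that `∑ x_j = 0`. By Lévy's continuity theorem it
suffices to find the limit of the characteristic function of `T_{2n} / √n`, where
`T_n = ∑_{k ≤ n} x(ξ_k)`; the target is `exp (-w)` with `w = v / (1 - 2a)` and `v = m⁻¹ ∑ x_j²`.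

Given the first `n` steps, the next step follows the empirical law of the past with weight `a` and
the uniform law with weight `1 - a` (`integral_step`). Two consequences are used. First, every
additive functional of the steps with centred `x` has second moment `O(n)` because `a < 1/2`
(`exists_second_moment_le`); applied to `x` and to `x² - v` this shows that the conditional mean
`a T_n / n` of the next increment is `O(n^{-1/2})` in `L²` and that its conditional second moment is
`v + O(n^{-1/2})` in `L²`.
Second, expanding the conditional characteristic function to second order, the characteristic
functions `ψ_n` of `T_n` satisfy
`ψ_{n+1}(s) = ψ_n(s (1 + a/n)) exp(-s² v / 2) + O(s² n^{-1/2} + |s|³ + s⁴)`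
(`exists_walkCF_succ_le`).

The Gaussian functions `exp (-n s² w / 2)` solve the same recursion up to `O(s² / n)`. Comparing the
two solutions, the error is bounded by `K n^{-γ} |s| √n` for `|s| √n ≤ R`
(`exists_walkCF_sub_le`): a step maps `q = |s| √(n+1)` to at most `(1 - c/(n+1)) q` with
`c = (1 - 2a)/4 > 0` (`contraction_factor_le`), and this contraction dominates both the decay of
`n^{-γ}` and the one-step errors, which are `O(q n^{-3/2})`. Evaluating at `2n` and `s = 1/√n`
gives the limit.
-/

open MeasureTheory ProbabilityTheory Filter Finset Topology Matrix

noncomputable section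

/-- The σ-algebra generated by the steps `ξ 1, …, ξ n` of the walk. -/
def stepFiltration {Ω : Type*} [MeasurableSpace Ω] {m : ℕ} (ξ : ℕ → Ω → Fin m) (n : ℕ) :
    MeasurableSpace Ω :=
  ⨆ k ∈ Finset.Icc 1 n, MeasurableSpace.comap (ξ k) ⊤

/-- A Type-I elephant random walk with memory parameter `p`, `m` step directions
and deterministic first step `i0`: `ξ n` is the index of the `n`-th step (for `n ≥ 1`). -/
structure IsTypeIERW {Ω : Type*} [MeasurableSpace Ω] (μ : Measure Ω)
    (m : ℕ) (p : ℝ) (i0 : Fin m) (ξ : ℕ → Ω → Fin m) : Prop where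
  measurable : ∀ n, Measurable (ξ n)
  first_step : ∀ᵐ ω ∂μ, ξ 1 ω = i0
  cond : ∀ n : ℕ, 1 ≤ n → ∀ j : Fin m,
    (μ[(fun ω => if ξ (n + 1) ω = j then (1 : ℝ) else 0) | stepFiltration ξ n]) =ᵐ[μ]
      (fun ω => (1 / (n : ℝ)) * ∑ k ∈ Finset.Icc 1 n,
        (p * (if ξ k ω = j then (1 : ℝ) else 0)
          + ((1 - p) / ((m : ℝ) - 1)) * (if ξ k ω = j then (0 : ℝ) else 1)))


/-- `ν` is the centered (multivariate) Gaussian distribution on `ℝ^d` with covariance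
matrix `S`: equivalently, every linear functional `x ↦ ⟨l, x⟩` pushes `ν` forward to a
real centered Gaussian with variance `⟨l, S l⟩`. -/
def IsCenteredGaussianCov {d : ℕ} (ν : Measure (Fin d → ℝ))
    (S : Matrix (Fin d) (Fin d) ℝ) : Prop :=
  IsProbabilityMeasure ν ∧ ∀ l : Fin d → ℝ,
    ν.map (fun x => l ⬝ᵥ x) =
      ProbabilityTheory.gaussianReal 0 (Real.toNNReal (l ⬝ᵥ S.mulVec l))

/-! ### Additive functionals of the walk and their second moments -/

/-- The additive functional `∑_{k ≤ n} x(ξ_k)` of the first `n` steps. -/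
def walkSum {Ω 𝕜 : Type*} [AddCommMonoid 𝕜] {m : ℕ} (ξ : ℕ → Ω → Fin m) (x : Fin m → 𝕜)
    (n : ℕ) (ω : Ω) : 𝕜 :=
  ∑ k ∈ Finset.Icc 1 n, x (ξ k ω)

section Walk

variable {Ω : Type*} {m : ℕ} {ξ : ℕ → Ω → Fin m}

lemma walkSum_succ {𝕜 : Type*} [AddCommMonoid 𝕜] (x : Fin m → 𝕜) (n : ℕ) (ω : Ω) :
    walkSum ξ x (n + 1) ω = walkSum ξ x n ω + x (ξ (n + 1) ω) := by
  rw [walkSum, Finset.sum_Icc_succ_top (by omega)]; rfl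

lemma norm_le_sum_norm {𝕜 : Type*} [RCLike 𝕜] (x : Fin m → 𝕜) (i : Fin m) :
    ‖x i‖ ≤ ∑ j, ‖x j‖ :=
  Finset.single_le_sum (f := fun j => ‖x j‖) (fun _ _ => norm_nonneg _) (Finset.mem_univ i)

lemma norm_walkSum_le {𝕜 : Type*} [RCLike 𝕜] (x : Fin m → 𝕜) (n : ℕ) (ω : Ω) :
    ‖walkSum ξ x n ω‖ ≤ n * ∑ j, ‖x j‖ := by
  refine (norm_sum_le _ _).trans ((Finset.sum_le_sum fun k _ => norm_le_sum_norm x _).trans ?_)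
  simp

variable [MeasurableSpace Ω]

lemma stepFiltration_le (hξ : ∀ n, Measurable (ξ n)) (n : ℕ) :
    stepFiltration ξ n ≤ ‹MeasurableSpace Ω› :=
  iSup₂_le fun k _ => measurable_iff_comap_le.1 (hξ k)

lemma measurable_walkSum {𝕜 : Type*} [RCLike 𝕜] (x : Fin m → 𝕜) (n : ℕ) :
    Measurable[stepFiltration ξ n] (walkSum ξ x n) := by
  refine Finset.measurable_fun_sum _ fun k hk => ?_
  have h : Measurable[stepFiltration ξ n] (ξ k) := by
    rw [measurable_iff_comap_le]
    exact le_iSup₂_of_le k hk le_rfl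
  exact (measurable_from_top (f := x)).comp h

lemma measurable_walkSum' {𝕜 : Type*} [RCLike 𝕜] (hξ : ∀ n, Measurable (ξ n))
    (x : Fin m → 𝕜) (n : ℕ) : Measurable (walkSum ξ x n) :=
  (measurable_walkSum x n).mono (stepFiltration_le hξ n) le_rfl

/-- One-step conditional law of the walk, tested against a bounded `g` depending on the first `n`
steps: the step `ξ (n + 1)` repeats the empirical law of the past with weight `a` and is uniform
with weight `1 - a`. -/
lemma integral_step {𝕜 : Type*} [RCLike 𝕜] {μ : Measure Ω} [IsProbabilityMeasure μ]
    (hm : 2 ≤ m) {p a : ℝ} {i0 : Fin m} (hERW : IsTypeIERW μ m p i0 ξ)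
    (ha : a = ((m : ℝ) * p - 1) / ((m : ℝ) - 1)) {n : ℕ} (hn : 1 ≤ n)
    (h : Fin m → 𝕜) {g : Ω → 𝕜} (hg : Measurable[stepFiltration ξ n] g)
    {C : ℝ} (hC : ∀ ω, ‖g ω‖ ≤ C) :
    ∫ ω, h (ξ (n + 1) ω) * g ω ∂μ =
      ∫ ω, ((a / n : ℝ) * walkSum ξ h n ω + ((1 - a) / m : ℝ) * ∑ j, h j) * g ω ∂μ := by
  have hle := stepFiltration_le hERW.measurable n
  have hg' : Measurable g := hg.mono hle le_rfl
  have hgi : Integrable g μ := .of_bound hg'.aestronglyMeasurable C (.of_forall hC)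
  have hsm (φ : Ω → ℝ) (B : ℝ) (hφ : Measurable φ) (hB : ∀ ω, ‖φ ω‖ ≤ B) :
      Integrable (fun ω => φ ω • g ω) μ :=
    hgi.bdd_smul B hφ.aestronglyMeasurable (.of_forall hB)
  have hm1 : (m : ℝ) - 1 ≠ 0 := by
    have : (2 : ℝ) ≤ m := by exact_mod_cast hm
    linarith
  have hm0 : (m : ℝ) ≠ 0 := by positivity
  have hn0 : (n : ℝ) ≠ 0 := by positivity
  -- the identity for the indicator of a single value `j`
  have key (j : Fin m) : ∫ ω, (if ξ (n + 1) ω = j then (1 : ℝ) else 0) • g ω ∂μ =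
      ∫ ω, ((a / n) * walkSum ξ (fun i => if i = j then (1 : ℝ) else 0) n ω +
        (1 - a) / m) • g ω ∂μ := by
    have hind : Measurable (fun ω => if ξ (n + 1) ω = j then (1 : ℝ) else 0) :=
      (measurable_from_top (f := fun i : Fin m => if i = j then (1 : ℝ) else 0)).comp
        (hERW.measurable (n + 1))
    have hb : ∀ ω, ‖(if ξ (n + 1) ω = j then (1 : ℝ) else 0)‖ ≤ 1 := by
      intro ω; split_ifs <;> simp
    have h1 := condExp_smul_of_aestronglyMeasurable_right (μ := μ) (m := stepFiltration ξ n)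
      (f := fun ω => if ξ (n + 1) ω = j then (1 : ℝ) else 0) (g := g)
      (.of_bound hind.aestronglyMeasurable 1 (.of_forall hb))
      (hsm _ 1 hind hb)
      hg.stronglyMeasurable.aestronglyMeasurable
    rw [← integral_condExp hle]
    refine integral_congr_ae ?_
    refine h1.trans ?_
    filter_upwards [hERW.cond n hn j] with ω hω
    simp only [Pi.smul_apply', hω]
    congr 1
    have : ∀ k ∈ Finset.Icc 1 n, (p * (if ξ k ω = j then (1 : ℝ) else 0)
          + ((1 - p) / ((m : ℝ) - 1)) * (if ξ k ω = j then (0 : ℝ) else 1)) =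
        a * (if ξ k ω = j then (1 : ℝ) else 0) + (1 - a) / m := by
      intro k _
      subst ha
      split_ifs <;> field_simp <;> ring
    rw [Finset.sum_congr rfl this, Finset.sum_add_distrib, ← Finset.mul_sum]
    simp only [walkSum, Finset.sum_const, Nat.card_Icc, add_tsub_cancel_right, nsmul_eq_mul]
    field_simp
  have hdec : ∀ i, h i = ∑ j, (if i = j then (1 : ℝ) else 0) • h j := by
    intro i; simp
  have hL : ∀ ω, h (ξ (n + 1) ω) * g ω =
      ∑ j, h j * ((if ξ (n + 1) ω = j then (1 : ℝ) else 0) • g ω) := by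
    intro ω
    conv_lhs => rw [hdec]
    rw [Finset.sum_mul]
    refine Finset.sum_congr rfl fun j _ => ?_
    simp only [RCLike.real_smul_eq_coe_mul]; ring
  have hR : ∀ ω, ((a / n : ℝ) * walkSum ξ h n ω + ((1 - a) / m : ℝ) * ∑ j, h j) * g ω =
      ∑ j, h j * (((a / n) * walkSum ξ (fun i => if i = j then (1 : ℝ) else 0) n ω +
        (1 - a) / m) • g ω) := by
    intro ω
    have : walkSum ξ h n ω =
        ∑ j, ((walkSum ξ (fun i => if i = j then (1 : ℝ) else 0) n ω : ℝ) : 𝕜) * h j := by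
      simp only [walkSum]
      rw [Finset.sum_congr rfl fun k _ => hdec (ξ k ω), Finset.sum_comm]
      refine Finset.sum_congr rfl fun j _ => ?_
      rw [RCLike.ofReal_sum, Finset.sum_mul]
      simp only [RCLike.real_smul_eq_coe_mul]
    rw [this, Finset.mul_sum, Finset.mul_sum, ← Finset.sum_add_distrib, Finset.sum_mul]
    refine Finset.sum_congr rfl fun j _ => ?_
    simp only [RCLike.real_smul_eq_coe_mul, RCLike.ofReal_add, RCLike.ofReal_mul]; ring
  simp_rw [hL, hR]
  rw [integral_finsetSum, integral_finsetSum]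
  · refine Finset.sum_congr rfl fun j _ => ?_
    rw [integral_const_mul, integral_const_mul, key]
  · intro j _
    refine Integrable.const_mul (hsm _
      (|a / n| * (n * ∑ i, ‖(if i = j then (1 : ℝ) else 0)‖) + |(1 - a) / m|) ?_
      fun ω => ?_) _
    · have := measurable_walkSum' hERW.measurable (fun i => if i = j then (1 : ℝ) else 0) n
      exact (this.const_mul _).add_const _
    · refine (norm_add_le _ _).trans ?_
      rw [norm_mul, Real.norm_eq_abs, Real.norm_eq_abs ((1 - a) / m)]
      gcongr
      exact norm_walkSum_le (fun i => if i = j then (1 : ℝ) else 0) n ω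
  · intro j _
    refine Integrable.const_mul (hsm _ 1 ?_ fun ω => ?_) _
    · exact (measurable_from_top (f := fun i : Fin m => if i = j then (1 : ℝ) else 0)).comp
        (hERW.measurable (n + 1))
    · split_ifs <;> simp

/-- For a centred `x` and `a < 1/2`, the second moment of `walkSum ξ x n` is `O(n)`. -/
lemma exists_second_moment_le {μ : Measure Ω} [IsProbabilityMeasure μ]
    (hm : 2 ≤ m) {p a : ℝ} {i0 : Fin m} (hERW : IsTypeIERW μ m p i0 ξ)
    (ha : a = ((m : ℝ) * p - 1) / ((m : ℝ) - 1)) (ha2 : a < 1 / 2)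
    (x : Fin m → ℝ) (hx : ∑ j, x j = 0) :
    ∃ K : ℝ, 0 ≤ K ∧ ∀ n : ℕ, ∫ ω, (walkSum ξ x n ω) ^ 2 ∂μ ≤ K * n := by
  set M := ∑ j, ‖x j‖ with hM
  have hM0 : 0 ≤ M := Finset.sum_nonneg fun _ _ => norm_nonneg _
  set b := max a 0 with hb
  have hb0 : 0 ≤ b := le_max_right _ _
  have hb2 : 0 < 1 - 2 * b := by
    have : b < 1 / 2 := max_lt ha2 (by norm_num)
    linarith
  have hK0 : 0 ≤ M ^ 2 / (1 - 2 * b) := by positivity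
  have hKe : M ^ 2 / (1 - 2 * b) = M ^ 2 / (1 - 2 * b) * (2 * b) + M ^ 2 := by
    field_simp; ring
  set K := M ^ 2 / (1 - 2 * b) with hK
  have hint (n : ℕ) : Integrable (fun ω => (walkSum ξ x n ω) ^ 2) μ := by
    refine .of_bound ((measurable_walkSum' hERW.measurable x n).pow_const 2).aestronglyMeasurable
      ((n * M) ^ 2) (.of_forall fun ω => ?_)
    rw [norm_pow]
    gcongr
    exact norm_walkSum_le x n ω
  refine ⟨K, hK0, fun n => ?_⟩
  induction n with
  | zero => simp [walkSum]
  | succ n ih =>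
    have hxm : Measurable (fun ω => x (ξ (n + 1) ω)) :=
      (measurable_from_top (f := x)).comp (hERW.measurable (n + 1))
    have hsq : ∀ ω, x (ξ (n + 1) ω) ^ 2 ≤ M ^ 2 := fun ω => by
      rw [← sq_abs, ← Real.norm_eq_abs]
      have := norm_le_sum_norm x (ξ (n + 1) ω)
      gcongr
    have hsqi : Integrable (fun ω => x (ξ (n + 1) ω) ^ 2) μ := by
      refine .of_bound (hxm.pow_const 2).aestronglyMeasurable (M ^ 2) (.of_forall fun ω => ?_)
      rw [Real.norm_eq_abs, abs_of_nonneg (sq_nonneg _)]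
      exact hsq ω
    have hE : ∫ ω, x (ξ (n + 1) ω) ^ 2 ∂μ ≤ M ^ 2 := by
      refine (integral_mono hsqi (integrable_const (M ^ 2)) hsq).trans ?_
      simp
    rcases Nat.eq_zero_or_pos n with rfl | hn
    · simp only [walkSum_succ]
      have : ∀ ω, walkSum ξ x 0 ω = 0 := fun ω => by simp [walkSum]
      simp only [this, zero_add, Nat.cast_one, mul_one]
      refine hE.trans ?_
      rw [hKe]
      have : 0 ≤ K * (2 * b) := by positivity
      linarith
    have hcross : ∫ ω, x (ξ (n + 1) ω) * walkSum ξ x n ω ∂μ =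
        a / n * ∫ ω, (walkSum ξ x n ω) ^ 2 ∂μ := by
      rw [integral_step hm hERW ha hn x (measurable_walkSum x n) (norm_walkSum_le x n), hx,
        ← integral_const_mul]
      refine integral_congr_ae (.of_forall fun ω => ?_)
      simp; ring
    have hci : Integrable (fun ω => x (ξ (n + 1) ω) * walkSum ξ x n ω) μ := by
      refine .of_bound (hxm.mul (measurable_walkSum' hERW.measurable x n)).aestronglyMeasurable
        (M * (n * M)) (.of_forall fun ω => ?_)
      rw [norm_mul]
      gcongr
      · exact norm_le_sum_norm x _
      · exact norm_walkSum_le x n ω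
    have hexp : ∫ ω, (walkSum ξ x (n + 1) ω) ^ 2 ∂μ = ∫ ω, (walkSum ξ x n ω) ^ 2 ∂μ +
        2 * ∫ ω, x (ξ (n + 1) ω) * walkSum ξ x n ω ∂μ + ∫ ω, x (ξ (n + 1) ω) ^ 2 ∂μ := by
      rw [← integral_const_mul, ← integral_add (hint n) (hci.const_mul 2),
        ← integral_add (f := fun ω => walkSum ξ x n ω ^ 2 + 2 * (x (ξ (n + 1) ω) * walkSum ξ x n ω))
          ((hint n).add (hci.const_mul 2)) hsqi]
      refine integral_congr_ae (.of_forall fun ω => ?_)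
      simp only [walkSum_succ]; ring
    have hnn : 0 ≤ ∫ ω, (walkSum ξ x n ω) ^ 2 ∂μ := integral_nonneg fun ω => sq_nonneg _
    have hn' : (0 : ℝ) < n := by exact_mod_cast hn
    have h3 : a / n * ∫ ω, (walkSum ξ x n ω) ^ 2 ∂μ ≤ K * b := by
      calc a / n * ∫ ω, (walkSum ξ x n ω) ^ 2 ∂μ ≤ b / n * (K * n) := by
            gcongr
            exact le_max_left _ _
        _ = K * b := by field_simp
    rw [hexp, hcross]
    push_cast
    linarith

end Walk

/-! ### One-step recursion for the characteristic functions -/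

lemma norm_cexp_sub_two_le (θ : ℝ) :
    ‖Complex.exp (Complex.I * θ) - 1 - Complex.I * θ‖ ≤ 2 * θ ^ 2 := by
  have hn : ‖Complex.I * (θ : ℂ)‖ = |θ| := by simp
  rcases le_or_gt |θ| 1 with h | h
  · have := Complex.norm_exp_sub_one_sub_id_le (x := Complex.I * θ) (by rwa [hn])
    rw [hn, sq_abs] at this
    nlinarith [sq_nonneg θ]
  · have h1 : ‖Complex.exp (Complex.I * θ) - 1‖ ≤ |θ| := Real.norm_exp_I_mul_ofReal_sub_one_le
    have h2 := norm_sub_le (Complex.exp (Complex.I * θ) - 1) (Complex.I * θ)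
    rw [hn] at h2
    rw [← sq_abs θ]
    nlinarith

lemma norm_cexp_sub_three_le (θ : ℝ) :
    ‖Complex.exp (Complex.I * θ) - (1 + Complex.I * θ - (θ : ℂ) ^ 2 / 2)‖ ≤ 3 * |θ| ^ 3 := by
  have hn : ‖Complex.I * (θ : ℂ)‖ = |θ| := by simp
  rcases le_or_gt |θ| 1 with h | h
  · have := Complex.exp_bound (x := Complex.I * θ) (by rwa [hn]) (n := 3) (by norm_num)
    rw [hn] at this
    have e : ∑ k ∈ Finset.range 3, (Complex.I * (θ : ℂ)) ^ k / (k.factorial : ℂ) =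
        1 + Complex.I * θ - (θ : ℂ) ^ 2 / 2 := by
      simp [Finset.sum_range_succ, mul_pow]; ring
    rw [e] at this
    refine this.trans ?_
    have : 0 ≤ |θ| ^ 3 := by positivity
    norm_num [Nat.factorial]
    nlinarith
  · have h1 := norm_cexp_sub_two_le θ
    have h2 : ‖(θ : ℂ) ^ 2 / 2‖ = θ ^ 2 / 2 := by simp
    have h3 := norm_add_le (Complex.exp (Complex.I * θ) - 1 - Complex.I * θ) ((θ : ℂ) ^ 2 / 2)
    rw [h2] at h3
    have e : Complex.exp (Complex.I * θ) - (1 + Complex.I * θ - (θ : ℂ) ^ 2 / 2) =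
      Complex.exp (Complex.I * θ) - 1 - Complex.I * θ + (θ : ℂ) ^ 2 / 2 := by ring
    rw [e]
    rw [← sq_abs θ] at h1 h3
    nlinarith [mul_pos (pow_pos (zero_lt_one.trans h) 2) (sub_pos.2 h)]

lemma abs_exp_neg_sub_one_le {y : ℝ} (hy : 0 ≤ y) : |Real.exp (-y) - 1| ≤ y := by
  have h1 := Real.add_one_le_exp (-y)
  have h2 := Real.exp_le_one_iff.2 (neg_nonpos.2 hy)
  rw [abs_le]; constructor <;> linarith

lemma abs_exp_neg_sub_two_le {y : ℝ} (hy : 0 ≤ y) : |Real.exp (-y) - 1 + y| ≤ y ^ 2 := by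
  have h1 := Real.add_one_le_exp (-y)
  rw [abs_le]
  refine ⟨by nlinarith [sq_nonneg y], ?_⟩
  rcases le_or_gt y 1 with h | h
  · have := Real.norm_exp_sub_one_sub_id_le (x := -y) (by simpa [abs_of_nonneg hy] using h)
    rw [Real.norm_eq_abs, Real.norm_eq_abs, abs_neg, sq_abs] at this
    have := (abs_le.1 this).2
    linarith
  · have h2 := Real.exp_le_one_iff.2 (neg_nonpos.2 hy)
    nlinarith

/-- Second-order expansion of `exp (iθ - y)`. -/
lemma norm_cexp_mul_exp_sub_le (θ : ℝ) {y : ℝ} (hy : 0 ≤ y) :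
    ‖Complex.exp (Complex.I * θ) * (Real.exp (-y) : ℝ) - (1 + Complex.I * θ - y)‖ ≤
      3 * θ ^ 2 + 2 * y ^ 2 := by
  have e : Complex.exp (Complex.I * θ) * (Real.exp (-y) : ℝ) - (1 + Complex.I * θ - y) =
      (Complex.exp (Complex.I * θ) - 1 - Complex.I * θ) * (Real.exp (-y) : ℝ) +
      ((Real.exp (-y) - 1 + y : ℝ) : ℂ) + Complex.I * θ * ((Real.exp (-y) - 1 : ℝ) : ℂ) := by
    push_cast; ring
  rw [e]
  refine (norm_add₃_le).trans ?_
  rw [norm_mul, norm_mul, norm_mul, Complex.norm_real, Complex.norm_real, Complex.norm_real,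
    Complex.norm_real, Complex.norm_I, one_mul]
  simp only [Real.norm_eq_abs]
  have h1 := norm_cexp_sub_two_le θ
  have h2 : |Real.exp (-y)| ≤ 1 := by
    rw [abs_of_pos (Real.exp_pos _)]; exact Real.exp_le_one_iff.2 (neg_nonpos.2 hy)
  have h3 := abs_exp_neg_sub_one_le hy
  have h4 := abs_exp_neg_sub_two_le hy
  have h5 : ‖Complex.exp (Complex.I * θ) - 1 - Complex.I * θ‖ * |Real.exp (-y)| ≤ 2 * θ ^ 2 * 1 := by
    gcongr
  have h6 : |θ| * |Real.exp (-y) - 1| ≤ |θ| * y := by gcongr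
  have h7 : |θ| * y ≤ θ ^ 2 + y ^ 2 := by
    rw [← sq_abs θ]; nlinarith [sq_nonneg (|θ| - y), sq_nonneg |θ|]
  linarith

/-- The characteristic function of `∑_{k ≤ n} x(ξ_k)` at frequency `s`. -/
def walkCF {Ω : Type*} [MeasurableSpace Ω] (μ : Measure Ω) {m : ℕ} (ξ : ℕ → Ω → Fin m)
    (x : Fin m → ℝ) (n : ℕ) (s : ℝ) : ℂ :=
  ∫ ω, Complex.exp (Complex.I * (s * walkSum ξ x n ω : ℝ)) ∂μ

section Step

variable {Ω : Type*} {m : ℕ} {ξ : ℕ → Ω → Fin m}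

/-- The pointwise form of the one-step expansion: `T` and `Y` are the sums over the past of `x` and
of `x² - v`, and the left-hand side compares the conditional characteristic function of the next
step with `exp (i s a T / n - s² v / 2)`. -/
lemma norm_conditional_cf_sub_le (hm : 2 ≤ m) (a : ℝ) (x : Fin m → ℝ) (hx : ∑ j, x j = 0)
    {v : ℝ} (hv : v = (m : ℝ)⁻¹ * ∑ j, x j ^ 2) {n : ℕ} (hn : 1 ≤ n) (s : ℝ) (ω : Ω) :
    ‖(((a / n : ℝ) : ℂ) * walkSum ξ (fun j => Complex.exp (Complex.I * (s * x j : ℝ))) n ω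
        + ((1 - a) / m : ℝ) * ∑ j, Complex.exp (Complex.I * (s * x j : ℝ)))
      - Complex.exp (Complex.I * (s * (a / n) * walkSum ξ x n ω : ℝ)) *
        (Real.exp (-(s ^ 2 * v / 2)) : ℝ)‖ ≤
    (|a| + |1 - a|) * (3 * (∑ j, ‖x j‖) ^ 3) * |s| ^ 3
      + s ^ 2 * |a| / 4 * ((walkSum ξ (fun j => x j ^ 2 - v) n ω) ^ 2 / (n * √n) + 1 / √n)
      + 3 * (s * (a / n) * walkSum ξ x n ω) ^ 2 + 2 * (s ^ 2 * v / 2) ^ 2 := by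
  have hm0 : (m : ℝ) ≠ 0 := by positivity
  have hn0 : (0 : ℝ) < n := by exact_mod_cast hn
  have hsn : 0 < √(n : ℝ) := Real.sqrt_pos.2 hn0
  have hv0 : 0 ≤ v := by rw [hv]; positivity
  set M := ∑ j, ‖x j‖ with hM
  set r : Fin m → ℂ := fun j => Complex.exp (Complex.I * (s * x j : ℝ)) -
    (1 + Complex.I * (s * x j : ℝ) - ((s * x j : ℝ) : ℂ) ^ 2 / 2) with hr
  have hrb (j : Fin m) : ‖r j‖ ≤ 3 * M ^ 3 * |s| ^ 3 := by
    refine (norm_cexp_sub_three_le (s * x j)).trans ?_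
    rw [abs_mul, mul_pow]
    have : |x j| ≤ M := norm_le_sum_norm x j
    have : |x j| ^ 3 ≤ M ^ 3 := by gcongr
    nlinarith [mul_le_mul_of_nonneg_left this (by positivity : (0:ℝ) ≤ 3 * |s| ^ 3)]
  set T := walkSum ξ x n ω with hT
  set Y := walkSum ξ (fun j => x j ^ 2 - v) n ω with hY
  have hsumv : ∑ j, x j ^ 2 = m * v := by rw [hv]; field_simp
  have hpt (j : Fin m) : Complex.exp (Complex.I * (s * x j : ℝ)) = r j +
      (1 + Complex.I * s * (x j : ℂ) - s ^ 2 / 2 * ((x j ^ 2 - v : ℝ) : ℂ) - s ^ 2 / 2 * v) := by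
    simp only [hr]; push_cast; ring
  have h1 : walkSum ξ (fun j => Complex.exp (Complex.I * (s * x j : ℝ))) n ω =
      walkSum ξ r n ω + (n + Complex.I * s * T - s ^ 2 / 2 * Y - n * (s ^ 2 / 2 * v)) := by
    have hTc : (T : ℂ) = ∑ k ∈ Finset.Icc 1 n, (x (ξ k ω) : ℂ) := by
      rw [hT, walkSum, Complex.ofReal_sum]
    have hYc : (Y : ℂ) = ∑ k ∈ Finset.Icc 1 n, ((x (ξ k ω) ^ 2 - v : ℝ) : ℂ) := by
      rw [hY, walkSum, Complex.ofReal_sum]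
    have hnc : (n : ℂ) = ∑ k ∈ Finset.Icc 1 n, (1 : ℂ) := by simp
    rw [hTc, hYc, hnc, Finset.sum_mul, Finset.mul_sum, Finset.mul_sum, walkSum, walkSum,
      ← Finset.sum_add_distrib, ← Finset.sum_sub_distrib, ← Finset.sum_sub_distrib,
      ← Finset.sum_add_distrib]
    refine Finset.sum_congr rfl fun k _ => ?_
    rw [hpt, one_mul]
  have h2 : ∑ j, Complex.exp (Complex.I * (s * x j : ℝ)) =
      ∑ j, r j + (m - m * (s ^ 2 / 2 * v)) := by
    have e1 : ∑ j, (x j : ℂ) = 0 := by exact_mod_cast hx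
    have e2 : ∑ j, ((x j ^ 2 - v : ℝ) : ℂ) = 0 := by
      rw [← Complex.ofReal_sum, Finset.sum_sub_distrib, hsumv]; simp
    simp only [hpt, Finset.sum_add_distrib, Finset.sum_sub_distrib, ← Finset.mul_sum, e1, e2]
    simp only [Finset.sum_const, Finset.card_univ, Fintype.card_fin, nsmul_eq_mul]
    ring
  have hmc : (m : ℂ) ≠ 0 := by exact_mod_cast hm0
  have hnc : (n : ℂ) ≠ 0 := by exact_mod_cast hn0.ne'
  have hsplit : (((a / n : ℝ) : ℂ) *
        walkSum ξ (fun j => Complex.exp (Complex.I * (s * x j : ℝ))) n ω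
        + ((1 - a) / m : ℝ) * ∑ j, Complex.exp (Complex.I * (s * x j : ℝ)))
      - Complex.exp (Complex.I * (s * (a / n) * T : ℝ)) * (Real.exp (-(s ^ 2 * v / 2)) : ℝ) =
      (((a / n : ℝ) : ℂ) * walkSum ξ r n ω + ((1 - a) / m : ℝ) * ∑ j, r j)
      - ((s ^ 2 * a / 2 * (Y / n) : ℝ) : ℂ)
      - (Complex.exp (Complex.I * (s * (a / n) * T : ℝ)) * (Real.exp (-(s ^ 2 * v / 2)) : ℝ)
        - (1 + Complex.I * (s * (a / n) * T : ℝ) - (s ^ 2 * v / 2 : ℝ))) := by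
    rw [h1, h2]
    push_cast
    field_simp
    ring
  rw [hsplit]
  refine (norm_sub_le _ _).trans ?_
  rw [add_assoc _ (3 * _) (2 * _)]
  refine add_le_add ?_ (norm_cexp_mul_exp_sub_le _ (by positivity))
  refine (norm_sub_le _ _).trans (add_le_add ?_ ?_)
  · refine (norm_add_le _ _).trans ?_
    rw [norm_mul, norm_mul, Complex.norm_real, Complex.norm_real]
    have e1 : ‖walkSum ξ r n ω‖ ≤ n * (3 * M ^ 3 * |s| ^ 3) := by
      refine (norm_sum_le _ _).trans ((Finset.sum_le_sum fun k _ => hrb _).trans ?_)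
      simp
    have e2 : ‖∑ j, r j‖ ≤ m * (3 * M ^ 3 * |s| ^ 3) := by
      refine (norm_sum_le _ _).trans ((Finset.sum_le_sum fun k _ => hrb _).trans ?_)
      simp
    calc ‖a / n‖ * ‖walkSum ξ r n ω‖ + ‖(1 - a) / m‖ * ‖∑ j, r j‖
        ≤ ‖a / n‖ * (n * (3 * M ^ 3 * |s| ^ 3)) + ‖(1 - a) / m‖ * (m * (3 * M ^ 3 * |s| ^ 3)) := by
          gcongr
      _ = _ := by
          rw [norm_div, norm_div, Real.norm_natCast, Real.norm_natCast, Real.norm_eq_abs,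
            Real.norm_eq_abs]
          field_simp
  · rw [Complex.norm_real, norm_mul, norm_div, norm_mul, norm_div, Real.norm_natCast]
    simp only [Real.norm_eq_abs, abs_pow, sq_abs, abs_two]
    -- weighted AM-GM: `|Y| ≤ (Y² / √n + √n) / 2`
    have hq : |Y| / n ≤ (Y ^ 2 / (n * √n) + 1 / √n) / 2 := by
      have hns : (n : ℝ) = √n * √n := (Real.mul_self_sqrt hn0.le).symm
      have : (Y ^ 2 / (n * √n) + 1 / √n) / 2 - |Y| / n = (|Y| - √n) ^ 2 / (2 * n * √n) := by
        rw [← sq_abs Y]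
        field_simp
        have := Real.sq_sqrt hn0.le
        nlinarith
      have : 0 ≤ (|Y| - √n) ^ 2 / (2 * n * √n) := by positivity
      linarith
    calc s ^ 2 * |a| / 2 * (|Y| / n)
        ≤ s ^ 2 * |a| / 2 * ((Y ^ 2 / (n * √n) + 1 / √n) / 2) := by gcongr
      _ = _ := by ring

variable [MeasurableSpace Ω]

/-- Approximate one-step recursion for the characteristic function: passing from `n + 1` to `n`
steps multiplies the frequency by `1 + a / n` and yields a Gaussian factor. -/
lemma exists_walkCF_succ_le {μ : Measure Ω} [IsProbabilityMeasure μ]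
    (hm : 2 ≤ m) {p a : ℝ} {i0 : Fin m} (hERW : IsTypeIERW μ m p i0 ξ)
    (ha : a = ((m : ℝ) * p - 1) / ((m : ℝ) - 1)) (ha2 : a < 1 / 2)
    (x : Fin m → ℝ) (hx : ∑ j, x j = 0) {v : ℝ} (hv : v = (m : ℝ)⁻¹ * ∑ j, x j ^ 2) :
    ∃ C : ℝ, 0 ≤ C ∧ ∀ n : ℕ, 1 ≤ n → ∀ s : ℝ,
      ‖walkCF μ ξ x (n + 1) s -
          walkCF μ ξ x n (s * (1 + a / n)) * (Real.exp (-(s ^ 2 * v / 2)) : ℝ)‖ ≤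
        C * (s ^ 2 / √n + |s| ^ 3 + s ^ 4) := by
  have hm0 : (m : ℝ) ≠ 0 := by positivity
  have hy : ∑ j, (x j ^ 2 - v) = 0 := by
    rw [Finset.sum_sub_distrib, hv]; simp; field_simp; simp
  obtain ⟨K₁, hK₁, hT⟩ := exists_second_moment_le hm hERW ha ha2 x hx
  obtain ⟨K₂, hK₂, hY⟩ := exists_second_moment_le hm hERW ha ha2 (fun j => x j ^ 2 - v) hy
  set A := (|a| + |1 - a|) * (3 * (∑ j, ‖x j‖) ^ 3) with hA
  have hA0 : 0 ≤ A := by positivity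
  refine ⟨A + (|a| / 4 * (K₂ + 1) + 3 * a ^ 2 * K₁) + v ^ 2 / 2, by positivity, fun n hn s => ?_⟩
  have hn0 : (0 : ℝ) < n := by exact_mod_cast hn
  have hsn : 0 < √(n : ℝ) := Real.sqrt_pos.2 hn0
  have hTm := measurable_walkSum' hERW.measurable x n
  have hYm := measurable_walkSum' hERW.measurable (fun j => x j ^ 2 - v) n
  set W : Ω → ℂ := fun ω =>
    ((a / n : ℝ) : ℂ) * walkSum ξ (fun j => Complex.exp (Complex.I * (s * x j : ℝ))) n ω
        + ((1 - a) / m : ℝ) * ∑ j, Complex.exp (Complex.I * (s * x j : ℝ)) with hW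
  have hWm : Measurable W := by
    have := measurable_walkSum' hERW.measurable
      (fun j => Complex.exp (Complex.I * (s * x j : ℝ))) n
    exact (this.const_mul _).add_const _
  have h1 : walkCF μ ξ x (n + 1) s =
      ∫ ω, W ω * Complex.exp (Complex.I * (s * walkSum ξ x n ω : ℝ)) ∂μ := by
    have := integral_step (𝕜 := ℂ) hm hERW ha hn
      (fun j => Complex.exp (Complex.I * (s * x j : ℝ)))
      (g := fun ω => Complex.exp (Complex.I * (s * walkSum ξ x n ω : ℝ))) (C := 1)
      (Complex.measurable_exp.comp ((Complex.measurable_ofReal.comp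
        ((measurable_walkSum x n).const_mul s)).const_mul _))
      (fun ω => by rw [Complex.norm_exp_I_mul_ofReal])
    refine Eq.trans ?_ this
    refine integral_congr_ae (.of_forall fun ω => ?_)
    simp only [walkSum_succ, ← Complex.exp_add]
    congr 1
    push_cast
    ring
  have h2 : walkCF μ ξ x n (s * (1 + a / n)) * (Real.exp (-(s ^ 2 * v / 2)) : ℝ) =
      ∫ ω, (Complex.exp (Complex.I * (s * (a / n) * walkSum ξ x n ω : ℝ)) *
        (Real.exp (-(s ^ 2 * v / 2)) : ℝ)) *
          Complex.exp (Complex.I * (s * walkSum ξ x n ω : ℝ)) ∂μ := by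
    rw [walkCF, ← integral_mul_const]
    refine integral_congr_ae (.of_forall fun ω => ?_)
    beta_reduce
    rw [mul_right_comm (Complex.exp _), ← Complex.exp_add]
    congr 2
    push_cast
    ring
  have hi2 : Integrable (fun ω => (Complex.exp (Complex.I * (s * (a / n) * walkSum ξ x n ω : ℝ)) *
        (Real.exp (-(s ^ 2 * v / 2)) : ℝ)) *
          Complex.exp (Complex.I * (s * walkSum ξ x n ω : ℝ))) μ := by
    refine .of_bound (by fun_prop) (Real.exp (-(s ^ 2 * v / 2))) (.of_forall fun ω => ?_)
    rw [norm_mul, norm_mul, Complex.norm_exp_I_mul_ofReal, Complex.norm_exp_I_mul_ofReal,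
      Complex.norm_real, Real.norm_eq_abs, abs_of_pos (Real.exp_pos _)]
    simp
  have hi1 : Integrable
      (fun ω => W ω * Complex.exp (Complex.I * (s * walkSum ξ x n ω : ℝ))) μ := by
    refine .of_bound (by fun_prop) (‖((a / n : ℝ) : ℂ)‖ *
      (n * ∑ j, ‖Complex.exp (Complex.I * (s * x j : ℝ))‖) +
      ‖(((1 - a) / m : ℝ) : ℂ) * ∑ j, Complex.exp (Complex.I * (s * x j : ℝ))‖)
      (.of_forall fun ω => ?_)
    rw [norm_mul, Complex.norm_exp_I_mul_ofReal, mul_one]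
    refine (norm_add_le _ _).trans ?_
    rw [norm_mul]
    gcongr
    exact norm_walkSum_le _ n ω
  rw [h1, h2, ← integral_sub hi1 hi2]
  have hTi : Integrable (fun ω => (walkSum ξ x n ω) ^ 2) μ := by
    refine .of_bound (by fun_prop) ((n * ∑ j, ‖x j‖) ^ 2) (.of_forall fun ω => ?_)
    rw [norm_pow]
    gcongr
    exact norm_walkSum_le x n ω
  have hYi : Integrable (fun ω => (walkSum ξ (fun j => x j ^ 2 - v) n ω) ^ 2) μ := by
    refine .of_bound (by fun_prop) ((n * ∑ j, ‖x j ^ 2 - v‖) ^ 2) (.of_forall fun ω => ?_)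
    rw [norm_pow]
    gcongr
    exact norm_walkSum_le (fun j => x j ^ 2 - v) n ω
  set c₀ := A * |s| ^ 3 + s ^ 2 * |a| / 4 * (1 / √n) + 2 * (s ^ 2 * v / 2) ^ 2 with hc₀
  set c₁ := s ^ 2 * |a| / 4 / (n * √n) with hc₁
  set c₂ := 3 * (s * (a / n)) ^ 2 with hc₂
  have hbi : Integrable (fun ω => c₁ * (walkSum ξ (fun j => x j ^ 2 - v) n ω) ^ 2
      + c₂ * (walkSum ξ x n ω) ^ 2) μ := (hYi.const_mul c₁).add (hTi.const_mul c₂)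
  refine (norm_integral_le_of_norm_le (g := fun ω =>
    c₀ + (c₁ * (walkSum ξ (fun j => x j ^ 2 - v) n ω) ^ 2 + c₂ * (walkSum ξ x n ω) ^ 2))
    ((integrable_const c₀).add hbi) (.of_forall fun ω => ?_)).trans ?_
  · rw [← sub_mul, norm_mul, Complex.norm_exp_I_mul_ofReal, mul_one]
    refine (norm_conditional_cf_sub_le hm a x hx hv hn s ω).trans (le_of_eq ?_)
    simp only [hc₀, hc₁, hc₂]
    ring
  · rw [integral_add (integrable_const c₀) hbi, integral_add (hYi.const_mul c₁) (hTi.const_mul c₂),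
      integral_const_mul, integral_const_mul]
    simp only [integral_const, probReal_univ, one_smul]
    have e1 : c₁ * ∫ ω, (walkSum ξ (fun j => x j ^ 2 - v) n ω) ^ 2 ∂μ ≤ c₁ * (K₂ * n) :=
      mul_le_mul_of_nonneg_left (hY n) (by positivity)
    have e2 : c₂ * ∫ ω, (walkSum ξ x n ω) ^ 2 ∂μ ≤ c₂ * (K₁ * n) :=
      mul_le_mul_of_nonneg_left (hT n) (by positivity)
    have e3 : c₁ * (K₂ * n) = |a| / 4 * K₂ * (s ^ 2 / √n) := by
      simp only [hc₁]; field_simp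
    have e4 : c₂ * (K₁ * n) = 3 * a ^ 2 * K₁ * (s ^ 2 / n) := by
      simp only [hc₂]; field_simp
    have e5 : s ^ 2 / n ≤ s ^ 2 / √n := by
      gcongr
      rw [Real.sqrt_le_left hn0.le]
      have : (1 : ℝ) ≤ n := by exact_mod_cast hn
      nlinarith
    have e6 : 3 * a ^ 2 * K₁ * (s ^ 2 / n) ≤ 3 * a ^ 2 * K₁ * (s ^ 2 / √n) := by gcongr
    have q1 : 0 ≤ s ^ 2 / √n := by positivity
    have q2 : 0 ≤ |s| ^ 3 := by positivity
    have q3 : 0 ≤ s ^ 4 := by positivity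
    set B := |a| / 4 * (K₂ + 1) + 3 * a ^ 2 * K₁ with hB
    have hB0 : 0 ≤ B := by positivity
    have e7 : c₀ + c₁ * (K₂ * n) + 3 * a ^ 2 * K₁ * (s ^ 2 / √n) =
        A * |s| ^ 3 + B * (s ^ 2 / √n) + v ^ 2 / 2 * s ^ 4 := by
      rw [e3]; simp only [hc₀, hB]; ring
    have p1 := mul_nonneg hA0 q1
    have p2 := mul_nonneg hA0 q3
    have p3 := mul_nonneg hB0 q2
    have p4 := mul_nonneg hB0 q3
    have p5 := mul_nonneg (by positivity : 0 ≤ v ^ 2 / 2) q1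
    have p6 := mul_nonneg (by positivity : 0 ≤ v ^ 2 / 2) q2
    have e8 : (A + B + v ^ 2 / 2) * (s ^ 2 / √n + |s| ^ 3 + s ^ 4) =
        A * |s| ^ 3 + B * (s ^ 2 / √n) + v ^ 2 / 2 * s ^ 4 +
        (A * (s ^ 2 / √n) + A * s ^ 4 + B * |s| ^ 3 + B * s ^ 4 +
          v ^ 2 / 2 * (s ^ 2 / √n) + v ^ 2 / 2 * |s| ^ 3) := by ring
    linarith

end Step

/-! ### Solving the recursion -/

/-- Polynomially decaying sequences absorb the recursion `b ↦ (1 - c / (n + 1)) b + D n^{-3/2}`. -/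
lemma exists_rpow_recursion {c D : ℝ} (hc : 0 < c) (hD : 0 ≤ D) :
    ∃ γ K₀ : ℝ, 0 < γ ∧ 0 ≤ K₀ ∧ ∀ K, K₀ ≤ K → ∀ n : ℕ, 1 ≤ n →
      K * (n : ℝ) ^ (-γ) * (1 - c / (n + 1)) + D / (n * √n) ≤ K * ((n + 1 : ℕ) : ℝ) ^ (-γ) := by
  refine ⟨min (c / 4) (1 / 2), 4 * D / c, by positivity, by positivity, fun K hK n hn => ?_⟩
  set γ := min (c / 4) (1 / 2) with hγ
  have hγ0 : 0 < γ := by positivity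
  have hγc : γ ≤ c / 4 := min_le_left _ _
  have hγh : γ ≤ 1 / 2 := min_le_right _ _
  have hK0 : 0 ≤ K := le_trans (by positivity) hK
  have hn1 : (1 : ℝ) ≤ n := by exact_mod_cast hn
  have hn0 : (0 : ℝ) < n := by linarith
  have hpos : 0 < (n : ℝ) ^ (-γ) := Real.rpow_pos_of_pos hn0 _
  have h1 : (n : ℝ) ^ (-γ) * (1 - γ / n) ≤ ((n + 1 : ℕ) : ℝ) ^ (-γ) := by
    have e : ((n + 1 : ℕ) : ℝ) = n * (1 + 1 / n) := by push_cast; field_simp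
    rw [e, Real.mul_rpow hn0.le (by positivity)]
    gcongr
    rw [Real.rpow_neg (by positivity)]
    have hb : (1 + 1 / (n : ℝ)) ^ γ ≤ 1 + γ * (1 / n) :=
      rpow_one_add_le_one_add_mul_self (by have : 0 ≤ 1 / (n : ℝ) := by positivity
                                           linarith) hγ0.le (by linarith)
    have hb0 : 0 < (1 + 1 / (n : ℝ)) ^ γ := by positivity
    have hg0 : 0 ≤ γ / n := by positivity
    have hg1 : γ / n ≤ 1 := by rw [div_le_one hn0]; linarith
    rw [← one_div, le_div_iff₀ hb0]
    calc (1 - γ / n) * (1 + 1 / (n : ℝ)) ^ γ ≤ (1 - γ / n) * (1 + γ * (1 / n)) :=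
          mul_le_mul_of_nonneg_left hb (by linarith)
      _ = 1 - (γ / n) ^ 2 := by ring
      _ ≤ 1 := by nlinarith
  have h2 : 1 / √(n : ℝ) ≤ (n : ℝ) ^ (-γ) := by
    rw [Real.sqrt_eq_rpow, one_div, ← Real.rpow_neg hn0.le]
    exact Real.rpow_le_rpow_of_exponent_le hn1 (by linarith)
  have h3 : c / (4 * n) ≤ c / (n + 1) - γ / n := by
    have a1 : c / (2 * n) ≤ c / (n + 1) := by gcongr; linarith
    have a2 : γ / n ≤ c / 4 / n := by gcongr
    have a3 : c / (2 * n) = c / (4 * n) + c / 4 / n := by field_simp; ring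
    linarith
  have h4 : D / (n * √n) ≤ K * (n : ℝ) ^ (-γ) * (c / (4 * n)) := by
    have hKc : D ≤ K * c / 4 := by
      rw [div_le_iff₀ hc] at hK; linarith
    calc D / (n * √n) = D / n * (1 / √n) := by field_simp
      _ ≤ (K * c / 4) / n * (n : ℝ) ^ (-γ) := by gcongr
      _ = _ := by field_simp
  have h5 : K * (n : ℝ) ^ (-γ) * (c / (4 * n)) ≤
      K * (n : ℝ) ^ (-γ) * (c / (n + 1) - γ / n) := by gcongr
  have h6 := mul_le_mul_of_nonneg_left h1 hK0
  linarith

lemma contraction_factor_le {a : ℝ} (ha1 : -1 < a) (ha2 : a < 1 / 2) {n : ℕ} (hn : 1 ≤ n)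
    (hna : a ^ 2 / (1 / 2 - a) ≤ n) :
    (1 + a / n) * √n ≤ (1 - (1 - 2 * a) / 4 / (n + 1)) * √((n + 1 : ℕ) : ℝ) := by
  have hn1 : (1 : ℝ) ≤ n := by exact_mod_cast hn
  have hn0 : (0 : ℝ) < n := by linarith
  have hc : (1 - 2 * a) / 4 / (n + 1) ≤ 1 := by
    rw [div_le_one (by positivity)]; linarith
  refine (abs_le_of_sq_le_sq' ?_ (mul_nonneg (by linarith) (Real.sqrt_nonneg _))).2
  rw [mul_pow, mul_pow, Real.sq_sqrt hn0.le, Real.sq_sqrt (by positivity)]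
  push_cast
  have e1 : (1 + a / n) ^ 2 * n = n + 2 * a + a ^ 2 / n := by field_simp; ring
  have e2 : (1 - (1 - 2 * a) / 4 / (n + 1)) ^ 2 * ((n : ℝ) + 1) =
      n + 1 / 2 + a + ((1 - 2 * a) / 4) ^ 2 / (n + 1) := by field_simp; ring
  have e3 : a ^ 2 / n ≤ 1 / 2 - a := by
    rw [div_le_iff₀ (by linarith)] at hna
    rw [div_le_iff₀ hn0]; linarith
  have e4 : 0 ≤ ((1 - 2 * a) / 4) ^ 2 / ((n : ℝ) + 1) := by positivity
  rw [e1, e2]; linarith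

/-- All one-step errors are `O(q n^{-3/2})`, since `|s| ≤ q / √n` and `q ≤ R`; here `r = √n`. -/
lemma step_error_le {s n r q R : ℝ} (hr : 1 ≤ r) (hn : r * r = n) (hq : 0 ≤ q) (hqR : q ≤ R)
    (hs : |s| ≤ q / r) :
    s ^ 2 / r + |s| ^ 3 + s ^ 4 ≤ (R + R ^ 2 + R ^ 3) * (q / (n * r)) := by
  subst hn
  have hr0 : 0 < r := by linarith
  have b1 : s ^ 2 / r ≤ R * (q / (r * r * r)) := by
    calc s ^ 2 / r = |s| ^ 2 / r := by rw [sq_abs]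
      _ ≤ (q / r) ^ 2 / r := by gcongr
      _ = q * (q / (r * r * r)) := by field_simp
      _ ≤ _ := by gcongr
  have b2 : |s| ^ 3 ≤ R ^ 2 * (q / (r * r * r)) := by
    calc |s| ^ 3 ≤ (q / r) ^ 3 := by gcongr
      _ = q ^ 2 * (q / (r * r * r)) := by field_simp
      _ ≤ _ := by gcongr
  have b3 : s ^ 4 ≤ R ^ 3 * (q / (r * r * r)) := by
    calc s ^ 4 = |s| ^ 4 := by rw [pow_abs, abs_of_nonneg (by positivity)]
      _ ≤ (q / r) ^ 4 := by gcongr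
      _ = q ^ 3 * (q / (r * r * r)) / r := by field_simp
      _ ≤ q ^ 3 * (q / (r * r * r)) := div_le_self (by positivity) hr
      _ ≤ _ := by gcongr
  linarith

section Limit

variable {Ω : Type*} [MeasurableSpace Ω] {m : ℕ} {ξ : ℕ → Ω → Fin m}

lemma norm_walkCF_sub_one_le {μ : Measure Ω} [IsProbabilityMeasure μ]
    (hξ : ∀ n, Measurable (ξ n)) (x : Fin m → ℝ) (n : ℕ) (s : ℝ) :
    ‖walkCF μ ξ x n s - 1‖ ≤ |s| * (n * ∑ j, ‖x j‖) := by
  have hTm := measurable_walkSum' hξ x n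
  have h1 : walkCF μ ξ x n s - 1 =
      ∫ ω, (Complex.exp (Complex.I * (s * walkSum ξ x n ω : ℝ)) - 1) ∂μ := by
    rw [integral_sub _ (integrable_const _)]
    · simp [walkCF]
    · refine .of_bound (by fun_prop) 1 (.of_forall fun ω => ?_)
      rw [Complex.norm_exp_I_mul_ofReal]
  rw [h1]
  refine (norm_integral_le_of_norm_le_const (C := |s| * (n * ∑ j, ‖x j‖))
    (.of_forall fun ω => ?_)).trans (by simp)
  refine Real.norm_exp_I_mul_ofReal_sub_one_le.trans ?_
  rw [norm_mul, Real.norm_eq_abs]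
  gcongr
  exact norm_walkSum_le x n ω

set_option maxHeartbeats 1000000 in
/-- Quantitative convergence of the characteristic functions, uniform over `|s| √n ≤ R`. The
factor `|s| √n` on the right is what makes the induction contract: a step replaces it by at most
`(1 - c / (n + 1))` times its value. -/
lemma exists_walkCF_sub_le {μ : Measure Ω} [IsProbabilityMeasure μ]
    (hm : 2 ≤ m) {p a : ℝ} {i0 : Fin m} (hERW : IsTypeIERW μ m p i0 ξ)
    (ha : a = ((m : ℝ) * p - 1) / ((m : ℝ) - 1)) (ha1 : -1 < a) (ha2 : a < 1 / 2)
    (x : Fin m → ℝ) (hx : ∑ j, x j = 0) {w : ℝ}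
    (hw : w = (m : ℝ)⁻¹ * (∑ j, x j ^ 2) / (1 - 2 * a)) {R : ℝ} (hR : 0 ≤ R) :
    ∃ γ K : ℝ, ∃ n₀ : ℕ, 0 < γ ∧ ∀ n : ℕ, n₀ ≤ n → ∀ s : ℝ, |s| * √n ≤ R →
      ‖walkCF μ ξ x n s - (Real.exp (-(n * s ^ 2 * w / 2)) : ℝ)‖ ≤
        K * (n : ℝ) ^ (-γ) * (|s| * √n) := by
  have h12a : 0 < 1 - 2 * a := by linarith
  obtain ⟨C, hC0, hC⟩ := exists_walkCF_succ_le hm hERW ha ha2 x hx rfl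
  set v := (m : ℝ)⁻¹ * ∑ j, x j ^ 2 with hv
  have hv0 : 0 ≤ v := by positivity
  have hw0 : 0 ≤ w := by rw [hw]; positivity
  have hvw : v = w * (1 - 2 * a) := by rw [hw]; field_simp
  set C' := C + a ^ 2 * w / 2 with hC'
  have hC'0 : 0 ≤ C' := by positivity
  obtain ⟨γ, K₀, hγ, hK₀, hrec⟩ := exists_rpow_recursion (c := (1 - 2 * a) / 4)
    (D := C' * (R + R ^ 2 + R ^ 3)) (by positivity) (by positivity)
  set n₀ := max 1 ⌈a ^ 2 / (1 / 2 - a)⌉₊ with hn₀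
  have hn₀1 : 1 ≤ n₀ := le_max_left _ _
  have hn₀0 : (0 : ℝ) < n₀ := by exact_mod_cast hn₀1
  set L := √n₀ * (∑ j, ‖x j‖) + R * w / 2 with hL
  set K := max K₀ (L * (n₀ : ℝ) ^ γ) with hK
  have hKK : K₀ ≤ K := le_max_left _ _
  have hK0 : 0 ≤ K := hK₀.trans hKK
  refine ⟨γ, K, n₀, hγ, fun n hn => ?_⟩
  induction n, hn using Nat.le_induction with
  | base =>
    intro s hs
    have e1 := norm_walkCF_sub_one_le (μ := μ) hERW.measurable x n₀ s
    have hy : 0 ≤ n₀ * s ^ 2 * w / 2 := by positivity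
    have e2 := abs_exp_neg_sub_one_le hy
    have e3 : (n₀ : ℝ) = √n₀ * √n₀ := (Real.mul_self_sqrt hn₀0.le).symm
    have e4 : n₀ * s ^ 2 * w / 2 ≤ (|s| * √n₀) * (R * w / 2) := by
      have : n₀ * s ^ 2 * w / 2 = (|s| * √n₀) * ((|s| * √n₀) * w / 2) := by
        rw [← sq_abs s]
        calc _ = (√n₀ * √n₀) * |s| ^ 2 * w / 2 := by rw [← e3]
          _ = _ := by ring
      rw [this]; gcongr
    have e5 : |s| * (n₀ * ∑ j, ‖x j‖) = (|s| * √n₀) * (√n₀ * ∑ j, ‖x j‖) := by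
      calc _ = |s| * ((√n₀ * √n₀) * ∑ j, ‖x j‖) := by rw [← e3]
        _ = _ := by ring
    have e6 : ‖walkCF μ ξ x n₀ s - (Real.exp (-(n₀ * s ^ 2 * w / 2)) : ℝ)‖ ≤
        (|s| * √n₀) * L := by
      have : walkCF μ ξ x n₀ s - (Real.exp (-(n₀ * s ^ 2 * w / 2)) : ℝ) =
          (walkCF μ ξ x n₀ s - 1) - ((Real.exp (-(n₀ * s ^ 2 * w / 2)) - 1 : ℝ) : ℂ) := by
        push_cast; ring
      rw [this]
      refine (norm_sub_le _ _).trans ?_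
      rw [Complex.norm_real, Real.norm_eq_abs, hL, mul_add]
      linarith
    have e7 : L ≤ K * (n₀ : ℝ) ^ (-γ) := by
      have : L = L * (n₀ : ℝ) ^ γ * (n₀ : ℝ) ^ (-γ) := by
        rw [mul_assoc, ← Real.rpow_add hn₀0]; simp
      rw [this]
      gcongr
      exact le_max_right _ _
    calc _ ≤ (|s| * √n₀) * L := e6
      _ ≤ (|s| * √n₀) * (K * (n₀ : ℝ) ^ (-γ)) := by gcongr
      _ = _ := by ring
  | succ n hn ih =>
    intro s hs
    have hn1 : 1 ≤ n := hn₀1.trans hn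
    have hn1' : (1 : ℝ) ≤ n := by exact_mod_cast hn1
    have hn0 : (0 : ℝ) < n := by linarith
    have hna : a ^ 2 / (1 / 2 - a) ≤ n :=
      (Nat.le_ceil _).trans (by exact_mod_cast (le_max_right _ _).trans hn)
    have hlam := contraction_factor_le ha1 ha2 hn1 hna
    have hfac : 0 ≤ 1 + a / n := by
      have : -1 ≤ a / n := by rw [le_div_iff₀ hn0]; linarith
      linarith
    set q := |s| * √((n + 1 : ℕ) : ℝ) with hq
    have hq0 : 0 ≤ q := by positivity
    set c := (1 - 2 * a) / 4 with hc
    have hsq : |s * (1 + a / n)| * √n ≤ (1 - c / (n + 1)) * q := by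
      rw [abs_mul, abs_of_nonneg hfac, mul_assoc]
      calc |s| * ((1 + a / n) * √n) ≤ |s| * ((1 - c / (n + 1)) * √((n + 1 : ℕ) : ℝ)) := by gcongr
        _ = _ := by rw [hq]; ring
    have hc0 : 0 ≤ c / (n + 1) := by positivity
    have hih := ih (s * (1 + a / n)) (by nlinarith)
    have hstep := hC n hn1 s
    set P := (Real.exp (-(s ^ 2 * v / 2)) : ℝ) with hP
    have hP1 : P ≤ 1 := Real.exp_le_one_iff.2 (by have : 0 ≤ s ^ 2 * v / 2 := by positivity
                                                  linarith)
    have hP0 : 0 ≤ P := (Real.exp_pos _).le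
    set G := Real.exp (-(n * (s * (1 + a / n)) ^ 2 * w / 2)) with hG
    set F := Real.exp (-(((n + 1 : ℕ) : ℝ) * s ^ 2 * w / 2)) with hF
    have hGP : G * P = F * Real.exp (-(a ^ 2 * w / 2 * (s ^ 2 / n))) := by
      rw [hG, hP, hF, ← Real.exp_add, ← Real.exp_add, hvw]
      congr 1
      push_cast
      field_simp
      ring
    have hF1 : F ≤ 1 := Real.exp_le_one_iff.2 (by
      have : 0 ≤ ((n + 1 : ℕ) : ℝ) * s ^ 2 * w / 2 := by positivity
      linarith)
    have hF0 : 0 ≤ F := (Real.exp_pos _).le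
    have hGF : |G * P - F| ≤ a ^ 2 * w / 2 * (s ^ 2 / n) := by
      rw [hGP, ← mul_sub_one, abs_mul, abs_of_nonneg hF0]
      have h0 : 0 ≤ a ^ 2 * w / 2 * (s ^ 2 / n) := by positivity
      calc _ ≤ 1 * (a ^ 2 * w / 2 * (s ^ 2 / n)) := by
            gcongr
            exact abs_exp_neg_sub_one_le h0
        _ = _ := one_mul _
    have hsplit : walkCF μ ξ x (n + 1) s - (F : ℝ) =
        (walkCF μ ξ x (n + 1) s - walkCF μ ξ x n (s * (1 + a / n)) * (P : ℝ)) +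
        (walkCF μ ξ x n (s * (1 + a / n)) - (G : ℝ)) * (P : ℝ) + ((G * P - F : ℝ) : ℂ) := by
      push_cast; ring
    rw [hsplit]
    refine norm_add₃_le.trans ?_
    rw [norm_mul, Complex.norm_real, Complex.norm_real, Real.norm_eq_abs, Real.norm_eq_abs,
      abs_of_nonneg hP0]
    have hmid : ‖walkCF μ ξ x n (s * (1 + a / n)) - (G : ℝ)‖ * P ≤
        K * (n : ℝ) ^ (-γ) * ((1 - c / (n + 1)) * q) := by
      calc _ ≤ ‖walkCF μ ξ x n (s * (1 + a / n)) - (G : ℝ)‖ * 1 := by gcongr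
        _ ≤ K * (n : ℝ) ^ (-γ) * (|s * (1 + a / n)| * √n) := by rw [mul_one]; exact hih
        _ ≤ _ := by gcongr
    have hsn0 : 0 < √(n : ℝ) := Real.sqrt_pos.2 hn0
    have hsn1 : 1 ≤ √(n : ℝ) := Real.one_le_sqrt.2 hn1'
    have hss : √(n : ℝ) * √n = n := Real.mul_self_sqrt hn0.le
    have hs1 : |s| ≤ q / √n := by
      rw [le_div_iff₀ hsn0, hq]
      gcongr
      simp
    have b3 := step_error_le hsn1 hss hq0 hs hs1
    have b4 : s ^ 2 / n ≤ s ^ 2 / √n := by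
      gcongr
      nlinarith
    have b5 : a ^ 2 * w / 2 * (s ^ 2 / n) ≤
        a ^ 2 * w / 2 * (s ^ 2 / √n + |s| ^ 3 + s ^ 4) := by
      have : 0 ≤ |s| ^ 3 := by positivity
      have : 0 ≤ s ^ 4 := by positivity
      refine mul_le_mul_of_nonneg_left ?_ (by positivity)
      linarith
    have b6 : C' * (s ^ 2 / √n + |s| ^ 3 + s ^ 4) ≤
        C' * ((R + R ^ 2 + R ^ 3) * (q / (n * √n))) :=
      mul_le_mul_of_nonneg_left b3 hC'0
    have hfin := mul_le_mul_of_nonneg_right (hrec K hKK n hn1) hq0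
    have e1 : (K * (n : ℝ) ^ (-γ) * (1 - c / (n + 1)) +
        C' * (R + R ^ 2 + R ^ 3) / (n * √n)) * q =
        K * (n : ℝ) ^ (-γ) * ((1 - c / (n + 1)) * q) +
        C' * ((R + R ^ 2 + R ^ 3) * (q / (n * √n))) := by ring
    have e2 : C' * (s ^ 2 / √n + |s| ^ 3 + s ^ 4) =
        C * (s ^ 2 / √n + |s| ^ 3 + s ^ 4) +
        a ^ 2 * w / 2 * (s ^ 2 / √n + |s| ^ 3 + s ^ 4) := by rw [hC']; ring
    linarith

/-- Convergence of the characteristic function along the scaling `S_{2n} / √n`. -/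
lemma tendsto_walkCF {μ : Measure Ω} [IsProbabilityMeasure μ]
    (hm : 2 ≤ m) {p a : ℝ} {i0 : Fin m} (hERW : IsTypeIERW μ m p i0 ξ)
    (ha : a = ((m : ℝ) * p - 1) / ((m : ℝ) - 1)) (ha1 : -1 < a) (ha2 : a < 1 / 2)
    (x : Fin m → ℝ) (hx : ∑ j, x j = 0) {w : ℝ}
    (hw : w = (m : ℝ)⁻¹ * (∑ j, x j ^ 2) / (1 - 2 * a)) :
    Tendsto (fun n : ℕ => walkCF μ ξ x (2 * n) (√n)⁻¹) atTop (𝓝 (Real.exp (-w) : ℝ)) := by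
  obtain ⟨γ, K, n₀, hγ, h⟩ := exists_walkCF_sub_le hm hERW ha ha1 ha2 x hx hw
    (Real.sqrt_nonneg 2)
  rw [tendsto_iff_norm_sub_tendsto_zero]
  have hlim : Tendsto (fun n : ℕ => K * ((2 * n : ℕ) : ℝ) ^ (-γ) * √2) atTop (𝓝 0) := by
    have h1 : Tendsto (fun n : ℕ => ((2 * n : ℕ) : ℝ)) atTop atTop :=
      tendsto_natCast_atTop_atTop.comp (tendsto_id.const_mul_atTop' (by norm_num))
    have h2 := ((tendsto_rpow_neg_atTop hγ).comp h1).const_mul K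
    simpa using h2.mul_const √2
  refine squeeze_zero' (.of_forall fun _ => norm_nonneg _) ?_ hlim
  filter_upwards [eventually_ge_atTop (max 1 n₀)] with n hn
  have hn1 : 1 ≤ n := (le_max_left _ _).trans hn
  have hn0 : (0 : ℝ) < n := by exact_mod_cast hn1
  have hsn : 0 < √(n : ℝ) := Real.sqrt_pos.2 hn0
  have e1 : |(√(n : ℝ))⁻¹| * √((2 * n : ℕ) : ℝ) = √2 := by
    rw [abs_of_pos (by positivity)]
    push_cast
    rw [Real.sqrt_mul (by norm_num)]
    field_simp
  have := h (2 * n) (by have := (le_max_right _ _).trans hn; omega) (√n)⁻¹ e1.le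
  rw [e1] at this
  have e2 : ((2 * n : ℕ) : ℝ) * (√(n : ℝ))⁻¹ ^ 2 * w / 2 = w := by
    rw [inv_pow, Real.sq_sqrt hn0.le]; push_cast; field_simp
  rwa [e2] at this

end Limit

/-! ### The Gaussian limit -/

/-- The one-dimensional marginals of Mathlib's multivariate Gaussian, read on `Fin d → ℝ`. -/
lemma isCenteredGaussianCov_map_ofLp {d : ℕ} {S : Matrix (Fin d) (Fin d) ℝ}
    (hS : S.PosSemidef) :
    IsCenteredGaussianCov ((multivariateGaussian 0 S).map
      (WithLp.ofLp : EuclideanSpace ℝ (Fin d) → Fin d → ℝ)) S := by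
  have hof : Measurable (WithLp.ofLp : EuclideanSpace ℝ (Fin d) → Fin d → ℝ) :=
    (PiLp.continuous_ofLp 2 _).measurable
  refine ⟨Measure.isProbabilityMeasure_map hof.aemeasurable, fun l => ?_⟩
  have hl : Measurable (fun x : Fin d → ℝ => l ⬝ᵥ x) := by
    unfold dotProduct
    fun_prop
  have hSl : 0 ≤ l ⬝ᵥ S *ᵥ l := by simpa using hS.dotProduct_mulVec_nonneg l
  rw [Measure.map_map hl hof]
  have : IsProbabilityMeasure ((multivariateGaussian 0 S).map
      ((fun x : Fin d → ℝ => l ⬝ᵥ x) ∘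
        (WithLp.ofLp : EuclideanSpace ℝ (Fin d) → Fin d → ℝ))) :=
    Measure.isProbabilityMeasure_map (hl.comp hof).aemeasurable
  refine Measure.ext_of_charFun (funext fun s => ?_)
  rw [charFun_gaussianReal, charFun_apply_real, integral_map (hl.comp hof).aemeasurable
    (by fun_prop)]
  have h := charFun_multivariateGaussian (μ := 0) hS (WithLp.toLp 2 (s • l))
  rw [charFun_apply] at h
  have e : ∀ y : EuclideanSpace ℝ (Fin d), inner ℝ y (WithLp.toLp 2 (s • l)) =
      s * (l ⬝ᵥ WithLp.ofLp y) := fun y => by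
    simp [EuclideanSpace.inner_eq_star_dotProduct]
  simp only [e] at h
  simp only [Function.comp_apply]
  push_cast at h
  rw [h, Real.coe_toNNReal _ hSl]
  congr 1
  simp [Matrix.mulVec_smul]
  ring

lemma posSemidef_covariance {d m : ℕ} {c : ℝ} (hc : 0 ≤ c) (z : Fin m → Fin d → ℝ) :
    (c • ((m : ℝ)⁻¹ • ∑ i, Matrix.vecMulVec (z i) (z i))).PosSemidef := by
  refine (Matrix.PosSemidef.smul (Matrix.posSemidef_sum _ fun i _ => ?_)
    (by positivity : (0 : ℝ) ≤ (m : ℝ)⁻¹)).smul hc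
  simpa using Matrix.posSemidef_vecMulVec_self_star (z i)

lemma dotProduct_covariance_mulVec {d m : ℕ} (c : ℝ) (z : Fin m → Fin d → ℝ) (l : Fin d → ℝ) :
    l ⬝ᵥ (c • ((m : ℝ)⁻¹ • ∑ i, Matrix.vecMulVec (z i) (z i))) *ᵥ l =
      c * ((m : ℝ)⁻¹ * ∑ i, (l ⬝ᵥ z i) ^ 2) := by
  simp only [Matrix.smul_mulVec, dotProduct_smul, smul_eq_mul, Matrix.sum_mulVec,
    dotProduct_sum, Matrix.vecMulVec_mulVec]
  congr 2
  refine Finset.sum_congr rfl fun i _ => ?_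
  simp [dotProduct_comm (z i) l]
  ring

/-- **CLT in the diffusive regime for the Type-I ERW** (marginal at `t = 1`): if
`0 < p < p_c^m`, then `(S_{2n} - 2n ū)/√n` converges in distribution to the centered
Gaussian on `ℝ^d` with covariance `2 C_a Σ(U)`. -/
theorem typeI_ERW_diffusive_clt
    {Ω : Type*} [MeasurableSpace Ω] (μ : Measure Ω) [IsProbabilityMeasure μ]
    (d m : ℕ) (hm : 2 ≤ m) (u : Fin m → Fin d → ℝ) (hu : Function.Injective u)
    (p : ℝ) (hp0 : 0 < p) (hpc : p < ((m : ℝ) + 1) / (2 * m))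
    (i0 : Fin m) (ξ : ℕ → Ω → Fin m) (hERW : IsTypeIERW μ m p i0 ξ)
    (ub : Fin d → ℝ) (hub : ub = (m : ℝ)⁻¹ • ∑ i, u i)
    (SigmaU : Matrix (Fin d) (Fin d) ℝ)
    (hSigmaU : SigmaU = (m : ℝ)⁻¹ • ∑ i, Matrix.vecMulVec (u i - ub) (u i - ub))
    (a Ca : ℝ) (ha : a = ((m : ℝ) * p - 1) / ((m : ℝ) - 1)) (hCa : Ca = 1 / (1 - 2 * a)) :
    ∃ ν : Measure (Fin d → ℝ), IsCenteredGaussianCov ν ((2 * Ca) • SigmaU) ∧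
      ∀ f : BoundedContinuousFunction (Fin d → ℝ) ℝ,
        Tendsto (fun n : ℕ => ∫ ω, f ((Real.sqrt n)⁻¹ •
            (∑ k ∈ Finset.Icc 1 (2 * n), u (ξ k ω) - (2 * (n : ℝ)) • ub)) ∂μ)
          atTop (𝓝 (∫ x, f x ∂ν)) := by
  have hm2 : (2 : ℝ) ≤ m := by exact_mod_cast hm
  have hm0 : (m : ℝ) ≠ 0 := by positivity
  have ha1 : -1 < a := by
    rw [ha, lt_div_iff₀ (by linarith)]
    nlinarith
  have ha2 : a < 1 / 2 := by
    rw [lt_div_iff₀ (by positivity)] at hpc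
    rw [ha, div_lt_iff₀ (by linarith)]
    linarith
  have h12a : 0 < 1 - 2 * a := by linarith
  have hCa0 : 0 ≤ 2 * Ca := by rw [hCa]; positivity
  set z : Fin m → Fin d → ℝ := fun i => u i - ub with hz
  have hz0 : ∑ i, z i = 0 := by
    simp only [hz, Finset.sum_sub_distrib, hub]
    simp [← Nat.cast_smul_eq_nsmul ℝ, smul_smul, hm0]
  have hS : ((2 * Ca) • SigmaU).PosSemidef := hSigmaU ▸ posSemidef_covariance hCa0 z
  have hof : Continuous (WithLp.ofLp : EuclideanSpace ℝ (Fin d) → Fin d → ℝ) :=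
    PiLp.continuous_ofLp 2 _
  have hto : Measurable (WithLp.toLp 2 : (Fin d → ℝ) → EuclideanSpace ℝ (Fin d)) :=
    (PiLp.continuous_toLp 2 _).measurable
  refine ⟨_, isCenteredGaussianCov_map_ofLp hS, fun f => ?_⟩
  set X : ℕ → Ω → Fin d → ℝ := fun n ω => (Real.sqrt n)⁻¹ •
    (∑ k ∈ Finset.Icc 1 (2 * n), u (ξ k ω) - (2 * (n : ℝ)) • ub) with hX
  have hXm (n : ℕ) : Measurable (X n) := by
    have hsum : Measurable fun ω => ∑ k ∈ Finset.Icc 1 (2 * n), u (ξ k ω) :=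
      Finset.measurable_fun_sum _ fun k _ => (measurable_of_finite u).comp (hERW.measurable k)
    exact (hsum.sub_const ((2 * (n : ℝ)) • ub)).const_smul (√(n : ℝ))⁻¹
  have hXm' (n : ℕ) : Measurable fun ω => WithLp.toLp 2 (X n ω) := hto.comp (hXm n)
  let P : ℕ → ProbabilityMeasure (EuclideanSpace ℝ (Fin d)) := fun n =>
    ⟨μ.map fun ω => WithLp.toLp 2 (X n ω), Measure.isProbabilityMeasure_map (hXm' n).aemeasurable⟩
  let P₀ : ProbabilityMeasure (EuclideanSpace ℝ (Fin d)) :=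
    ⟨multivariateGaussian 0 ((2 * Ca) • SigmaU), inferInstance⟩
  have hP : Tendsto P atTop (𝓝 P₀) := by
    refine ProbabilityMeasure.tendsto_iff_tendsto_charFun.2 fun t => ?_
    -- in direction `t` the rescaled walk is the scalar functional `√n⁻¹ ∑ x(ξ_k)`
    set x : Fin m → ℝ := fun j => WithLp.ofLp t ⬝ᵥ z j with hx
    have hx0 : ∑ j, x j = 0 := by
      simp only [hx, ← dotProduct_sum, hz0, dotProduct_zero]
    have hlim := tendsto_walkCF hm hERW ha ha1 ha2 x hx0 rfl
    have h0 : charFun (P₀ : Measure (EuclideanSpace ℝ (Fin d))) t =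
        (Real.exp (-((m : ℝ)⁻¹ * (∑ j, x j ^ 2) / (1 - 2 * a))) : ℝ) := by
      change charFun (multivariateGaussian 0 ((2 * Ca) • SigmaU)) t = _
      rw [charFun_multivariateGaussian hS, hSigmaU, dotProduct_covariance_mulVec, hCa]
      rw [Complex.ofReal_exp]
      congr 1
      rw [inner_zero_right]
      push_cast
      ring
    rw [h0]
    refine hlim.congr fun n => ?_
    change _ = charFun (μ.map fun ω => WithLp.toLp 2 (X n ω)) t
    rw [charFun_apply, integral_map (hXm' n).aemeasurable (by fun_prop), walkCF]
    refine integral_congr_ae (.of_forall fun ω => ?_)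
    have e : inner ℝ (WithLp.toLp 2 (X n ω)) t = (√n)⁻¹ * walkSum ξ x (2 * n) ω := by
      have e1 : X n ω = (√n)⁻¹ • ∑ k ∈ Finset.Icc 1 (2 * n), z (ξ k ω) := by
        simp only [hX, hz, Finset.sum_sub_distrib, Finset.sum_const, Nat.card_Icc,
          add_tsub_cancel_right, ← Nat.cast_smul_eq_nsmul ℝ]
        push_cast
        rfl
      rw [EuclideanSpace.inner_eq_star_dotProduct, e1]
      simp [dotProduct_sum, walkSum, hx]
    simp only [e]
    rw [mul_comm]
  have hf := ProbabilityMeasure.tendsto_iff_forall_integral_tendsto.1 hP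
    (f.compContinuous ⟨WithLp.ofLp, hof⟩)
  have r0 : ∫ x, f x ∂((multivariateGaussian 0 ((2 * Ca) • SigmaU)).map
      (WithLp.ofLp : EuclideanSpace ℝ (Fin d) → Fin d → ℝ)) =
      ∫ y, (f.compContinuous ⟨WithLp.ofLp, hof⟩) y ∂(P₀ : Measure _) := by
    rw [integral_map hof.measurable.aemeasurable f.continuous.aestronglyMeasurable]
    rfl
  rw [r0]
  refine hf.congr fun n => ?_
  change ∫ y, _ ∂(μ.map fun ω => WithLp.toLp 2 (X n ω)) = _
  rw [integral_map (hXm' n).aemeasurable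
    (BoundedContinuousFunction.continuous _).aestronglyMeasurable]
  rfl
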